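/- arXiv:math/0505534 — 3 statements merged into one kernel-verified Lean document; each statement's English description precedes it below -/
import Mathlib

section
/- Let 𝒞 and 𝒟 be abelian categories, S : 𝒞 ⥤ 𝒟 a functor and T : 𝒟 ⥤ 𝒞 a right adjoint of S. If N is a cogenerator object of 𝒟 and T(N) is an injective object of 𝒞, then S is an exact functor. -/
/-!
As a left adjoint, `S` preserves all colimits, so it is additive and right exact, and exactness
reduces to preservation of monomorphisms. For a monomorphism `f : X ⟶ Y`, injectivity of `T(N)`
and the adjunction show that every morphism `S(X) ⟶ N` factors through `S(f)`. Hence two morphisms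
into `S(X)` that agree after `S(f)` agree after every morphism to the cogenerator `N`, and are
therefore equal.
-/

open CategoryTheory CategoryTheory.Limits

/-- If `T : 𝒟 ⥤ 𝒞` is right adjoint to `S : 𝒞 ⥤ 𝒟` between abelian categories,
`N` is a cogenerator of `𝒟` and `T(N)` is injective in `𝒞`, then `S` is exact. -/
theorem exact_of_cogenerator_injective_radjoint
    {C : Type*} [Category C] [Abelian C]
    {D : Type*} [Category D] [Abelian D]
    (S : C ⥤ D) (T : D ⥤ C) (adj : S ⊣ T)
    (N : D) (hN : IsCoseparator N) (hTN : Injective (T.obj N)) :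
    PreservesFiniteLimits S ∧ PreservesFiniteColimits S := by
  have hcolim : PreservesFiniteColimits S :=
    have := adj.leftAdjoint_preservesColimits
    PreservesColimits.preservesFiniteColimits S
  have hzero : S.PreservesZeroMorphisms :=
    have := adj.isLeftAdjoint
    inferInstance
  have hbiprod : PreservesBinaryBiproducts S :=
    preservesBinaryBiproducts_of_preservesBinaryCoproducts S
  have hadd : S.Additive := Functor.additive_of_preservesBinaryBiproducts S
  have hmono : S.PreservesMonomorphisms := by
    refine ⟨fun {X Y} f _ => ⟨fun u v huv => hN.def u v fun h => ?_⟩⟩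
    -- Injectivity of `T(N)` extends the transpose of `h : S(X) ⟶ N` along `f`;
    -- transposing back shows that `h` factors through `S(f)`.
    have hfac : S.map f ≫ (adj.homEquiv Y N).symm
        (Injective.factorThru (adj.homEquiv X N h) f) = h := by
      rw [← adj.homEquiv_naturality_left_symm, Injective.comp_factorThru, Equiv.symm_apply_apply]
    rw [← hfac, ← Category.assoc, ← Category.assoc, huv]
  -- A right exact additive functor that preserves monomorphisms is exact.
  have hhom : S.PreservesHomology :=
    S.preservesHomology_of_preservesMonos_and_cokernels
  exact ⟨S.preservesFiniteLimits_of_preservesHomology, hcolim⟩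
end

section
/- Let 𝒞 and 𝒟 be abelian categories such that 𝒟 is cocomplete (AB3), has a generator and has enough injectives, let S : 𝒞 ⥤ 𝒟 be a functor and T : 𝒟 ⥤ 𝒞 a right adjoint of S. Then S is faithful if and only if T preserves cogenerator objects (i.e., T(N) is a cogenerator object of 𝒞 for every cogenerator object N of 𝒟). -/
open CategoryTheory CategoryTheory.Limits

/-!
Under `Hom(Y, T N) ≃ Hom(S Y, N)`, precomposition with `f` corresponds to precomposition with
`S f`. So, for a coseparator `N` of `D`, the morphisms `f` and `g` agree after every
`h : Y ⟶ T N` iff `S f = S g`. Hence `T N` is a coseparator iff `S` is faithful. The converse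
implication of the theorem therefore only needs some coseparator of `D` to exist: a cocomplete
abelian category with a separator is well-copowered, hence complete by the special adjoint functor
theorem, and with enough injectives it then has an injective coseparator.
-/

/-- For a single coseparator `N`, faithfulness of the left adjoint is equivalent to `T.obj N` being
a coseparator. -/
theorem isCoseparator_radjoint_obj_iff {C : Type*} [Category C] {D : Type*} [Category D]
    {S : C ⥤ D} {T : D ⥤ C} (adj : S ⊣ T) {N : D} (hN : IsCoseparator N) :
    IsCoseparator (T.obj N) ↔ S.Faithful := by
  rw [isCoseparator_def]
  constructor
  · refine fun hT => ⟨fun {X Y f g} hfg => hT f g fun h => ?_⟩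
    apply (adj.homEquiv _ _).symm.injective
    rw [adj.homEquiv_naturality_left_symm, adj.homEquiv_naturality_left_symm, hfg]
  · intro hS X Y f g hfg
    refine S.map_injective ((isCoseparator_def N).1 hN _ _ fun k => ?_)
    apply (adj.homEquiv _ _).injective
    rw [adj.homEquiv_naturality_left, adj.homEquiv_naturality_left, hfg]

/-- Let `𝒟` be cocomplete (AB3) with a generator and enough injectives, and let
`T : 𝒟 ⥤ 𝒞` be right adjoint to `S : 𝒞 ⥤ 𝒟` between abelian categories.
Then `S` is faithful iff `T` preserves cogenerator objects. -/
theorem faithful_iff_radjoint_preserves_coseparators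
    {C : Type*} [Category C] [Abelian C]
    {D : Type*} [Category D] [Abelian D] [HasColimits D] [EnoughInjectives D]
    (G : D) (hG : IsSeparator G)
    (S : C ⥤ D) (T : D ⥤ C) (adj : S ⊣ T) :
    S.Faithful ↔ (∀ N : D, IsCoseparator N → IsCoseparator (T.obj N)) := by
  refine ⟨fun hS N hN => (isCoseparator_radjoint_obj_iff adj hN).2 hS, fun hT => ?_⟩
  have := wellPowered_of_isSeparator G hG
  have : HasLimits D := hasLimits_of_hasColimits_of_isSeparating hG
  obtain ⟨N, -, hN⟩ := Abelian.has_injective_coseparator G hG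
  exact (isCoseparator_radjoint_obj_iff adj hN).1 (hT N hN)
end

section
/- Let 𝒞 and 𝒟 be abelian categories such that 𝒟 is cocomplete (AB3), has a generator and has enough injectives, let S : 𝒞 ⥤ 𝒟 be a functor and T : 𝒟 ⥤ 𝒞 a right adjoint of S. Then S is faithfully exact (i.e., both faithful and exact) if and only if T preserves injective cogenerator objects (i.e., for every object N of 𝒟 that is simultaneously injective and a cogenerator, T(N) is simultaneously injective and a cogenerator in 𝒞). -/
open CategoryTheory CategoryTheory.Limits

/-!
Under the adjunction `S ⊣ T`, a map `Y ⟶ T N` separates `f, g : X ⟶ Y` exactly when its transpose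
`S Y ⟶ N` separates `S f, S g`; so for a coseparator `N`, the functor `S` is faithful iff `T N` is
a coseparator. A left adjoint is always right exact, so `S` is exact iff it preserves
monomorphisms, which, as `𝒟` has enough injectives, happens iff `T` preserves injectives.

What remains is to pass from injective coseparators to arbitrary injectives. A cocomplete abelian
category with a separator is complete by the special adjoint functor theorem, hence `𝒟` has an
injective coseparator `N`. For any injective `I`, the product `N ⨯ I` is again an injective
coseparator, and `T I` is a retract of `T (N ⨯ I)`.
-/

/-- For a coseparator `N`, faithfulness of the left adjoint is the same as `T N` being a
coseparator: both say that the maps `S Y ⟶ N`, equivalently `Y ⟶ T N`, separate maps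
into `Y`. -/
lemma faithful_iff_isCoseparator_obj {C : Type*} [Category C] {D : Type*} [Category D]
    {S : C ⥤ D} {T : D ⥤ C} (adj : S ⊣ T) {N : D} (hN : IsCoseparator N) :
    S.Faithful ↔ IsCoseparator (T.obj N) := by
  constructor
  · intro _
    refine (isCoseparator_def _).2 fun X Y f g h => S.map_injective (hN.def _ _ fun k => ?_)
    apply (adj.homEquiv _ _).injective
    simpa [adj.homEquiv_naturality_left] using h (adj.homEquiv _ _ k)
  · intro hT
    refine ⟨fun {X Y f g} hfg => hT.def _ _ fun k => ?_⟩
    apply (adj.homEquiv _ _).symm.injective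
    rw [adj.homEquiv_naturality_left_symm, adj.homEquiv_naturality_left_symm, hfg]

/-- A left adjoint between abelian categories that preserves monomorphisms is left exact. -/
lemma preservesFiniteLimits_of_adjunction {C : Type*} [Category C] [Abelian C]
    {D : Type*} [Category D] [Abelian D] {S : C ⥤ D} {T : D ⥤ C} (adj : S ⊣ T)
    [S.PreservesMonomorphisms] : PreservesFiniteLimits S := by
  have : PreservesColimitsOfSize.{0, 0} S := adj.leftAdjoint_preservesColimits
  have : S.IsLeftAdjoint := adj.isLeftAdjoint
  have : PreservesBinaryBiproducts S := preservesBinaryBiproducts_of_preservesBinaryCoproducts S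
  have : S.Additive := Functor.additive_of_preservesBinaryBiproducts S
  have : S.PreservesHomology := S.preservesHomology_of_preservesMonos_and_cokernels
  exact S.preservesFiniteLimits_of_preservesHomology

/-- Let `𝒟` be cocomplete (AB3) with a generator and enough injectives, and let
`T : 𝒟 ⥤ 𝒞` be right adjoint to `S : 𝒞 ⥤ 𝒟` between abelian categories.
Then `S` is faithfully exact (faithful and exact) iff `T` preserves injective
cogenerator objects. -/
theorem faithfully_exact_iff_radjoint_preserves_injective_coseparators
    {C : Type*} [Category C] [Abelian C]
    {D : Type*} [Category D] [Abelian D] [HasColimits D] [EnoughInjectives D]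
    (G : D) (hG : IsSeparator G)
    (S : C ⥤ D) (T : D ⥤ C) (adj : S ⊣ T) :
    (S.Faithful ∧ PreservesFiniteLimits S ∧ PreservesFiniteColimits S) ↔
      (∀ N : D, Injective N → IsCoseparator N →
        Injective (T.obj N) ∧ IsCoseparator (T.obj N)) := by
  constructor
  · rintro ⟨hS, _, _⟩ N hN hN'
    exact ⟨adj.map_injective N hN, (faithful_iff_isCoseparator_obj adj hN').1 hS⟩
  · intro h
    have := wellPowered_of_isSeparator G hG
    have : HasSeparator D := ⟨⟨G, hG⟩⟩
    have : HasLimits D := hasLimits_of_hasColimits_of_hasSeparator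
    obtain ⟨N, hN, hN'⟩ := Abelian.has_injective_coseparator G hG
    have : T.PreservesInjectiveObjects := by
      refine ⟨fun {I} hI => ?_⟩
      have := (h (N ⨯ I) inferInstance (isCoseparator_prod_of_isCoseparator_left N I hN')).1
      let r : Retract I (N ⨯ I) :=
        { i := prod.lift 0 (𝟙 I), r := prod.snd, retract := prod.lift_snd _ _ }
      exact (r.map T).injective
    have : S.PreservesMonomorphisms :=
      Functor.preservesMonomorphisms_of_adjunction_of_preservesInjectiveObjects adj
    have : PreservesColimitsOfSize.{0, 0} S := adj.leftAdjoint_preservesColimits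
    exact ⟨(faithful_iff_isCoseparator_obj adj hN').2 (h N hN hN').2,
      preservesFiniteLimits_of_adjunction adj, inferInstance⟩
end
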